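/- Let p > 5, let N ≥ 2 be an integer, let α < 0 and ω > α²/N², and define φ : [0,∞) → ℝ by φ(x) = (((p+1)ω/2)·sech²(((p−1)√ω/2)·x − arctanh(α/(N√ω))))^{1/(p−1)}. Let A be the set of continuously differentiable functions v : [0,∞) → ℂ such that ∫₀^∞|v|²dx, ∫₀^∞|v'|²dx and ∫₀^∞|v|^{p+1}dx are all finite, and for v ∈ A define S_ω(v) = N·((1/2)∫₀^∞|v'|²dx + (ω/2)∫₀^∞|v|²dx − (1/(p+1))∫₀^∞|v|^{p+1}dx) + (α/2)|v(0)|², I_ω(v) = N·(∫₀^∞|v'|²dx + ω∫₀^∞|v|²dx − ∫₀^∞|v|^{p+1}dx) + α|v(0)|², and P(v) = N·(∫₀^∞|v'|²dx − ((p−1)/(2(p+1)))∫₀^∞|v|^{p+1}dx) + (α/2)|v(0)|². Set d = inf { S_ω(v) : v ∈ A, v not identically zero, I_ω(v) = 0 }, and assume: (i) the variational characterization d = ((p−1)/(2(p+1)))·N·∫₀^∞ φ^{p+1} dx, and (ii) the second-derivative condition ∫₀^∞ φ'² dx ≤ ((p−1)(p−3)/(4(p+1)))·∫₀^∞ φ^{p+1}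 dx. Then every v ∈ A satisfying ∫₀^∞|v|²dx ≤ ∫₀^∞ φ²dx, ∫₀^∞|v|^{p+1}dx > ∫₀^∞ φ^{p+1}dx and P(v) ≤ 0 obeys d ≤ S_ω(v) − (1/2)·P(v). -/

import Mathlib

open MeasureTheory Real Set Filter Topology

/-- Inverse hyperbolic tangent. -/
noncomputable def arctanh (x : ℝ) : ℝ := Real.log ((1 + x) / (1 - x)) / 2

/-- Membership in the admissible class `A`: continuously differentiable on `[0,∞)` with
`|v|²`, `|v'|²` and `|v|^{p+1}` integrable on `(0,∞)`. -/
def MemA (p : ℝ) (v : ℝ → ℂ) : Prop :=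
  ContDiffOn ℝ 1 v (Set.Ici 0) ∧
  MeasureTheory.IntegrableOn (fun x => ‖v x‖ ^ 2) (Set.Ioi 0) ∧
  MeasureTheory.IntegrableOn (fun x => ‖deriv v x‖ ^ 2) (Set.Ioi 0) ∧
  MeasureTheory.IntegrableOn (fun x => ‖v x‖ ^ (p + 1)) (Set.Ioi 0)

/-- The action functional `S_ω`. -/
noncomputable def Sfun (p α ω : ℝ) (N : ℕ) (v : ℝ → ℂ) : ℝ :=
  (N : ℝ) * ((1 / 2) * (∫ x in Set.Ioi (0 : ℝ), ‖deriv v x‖ ^ 2)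
      + (ω / 2) * (∫ x in Set.Ioi (0 : ℝ), ‖v x‖ ^ 2)
      - (1 / (p + 1)) * (∫ x in Set.Ioi (0 : ℝ), ‖v x‖ ^ (p + 1)))
    + (α / 2) * ‖v 0‖ ^ 2

/-- The Nehari functional `I_ω`. -/
noncomputable def Ifun (p α ω : ℝ) (N : ℕ) (v : ℝ → ℂ) : ℝ :=
  (N : ℝ) * ((∫ x in Set.Ioi (0 : ℝ), ‖deriv v x‖ ^ 2)
      + ω * (∫ x in Set.Ioi (0 : ℝ), ‖v x‖ ^ 2)
      - (∫ x in Set.Ioi (0 : ℝ), ‖v x‖ ^ (p + 1)))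
    + α * ‖v 0‖ ^ 2

/-- The virial functional `P`. -/
noncomputable def Pfun (p α : ℝ) (N : ℕ) (v : ℝ → ℂ) : ℝ :=
  (N : ℝ) * ((∫ x in Set.Ioi (0 : ℝ), ‖deriv v x‖ ^ 2)
      - (p - 1) / (2 * (p + 1)) * (∫ x in Set.Ioi (0 : ℝ), ‖v x‖ ^ (p + 1)))
    + (α / 2) * ‖v 0‖ ^ 2

/-!
Dilate `v` to `w x = √l * v (l * x)`, which keeps the mass, with `l < 1` chosen so that
`∫ ‖w‖ ^ (p + 1) = ∫ φ ^ (p + 1)`. On the Nehari manifold the action is a multiple of the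
`L^(p+1)` integral, and a function with `I_ω < 0` can be shrunk onto the manifold, so its `L^(p+1)`
integral exceeds that of `φ`; hence `0 ≤ I_ω w`. The equation of the soliton gives
`φ'² = ω φ² - 2 / (p + 1) φ ^ (p + 1)`, so the second-derivative condition bounds `ω ∫ φ²`, and with
it `ω ∫ ‖v‖²`, by a multiple of `∫ φ ^ (p + 1)`. Eliminating `∫ ‖v'‖²` through `P v ≤ 0` leaves an
inequality in the single variable `l`.
-/

section Integrals

variable {E : Type*} [NormedAddCommGroup E]

/-- The mass `∫₀^∞ ‖v‖²`. -/
noncomputable def mass (v : ℝ → E) : ℝ := ∫ x in Ioi (0 : ℝ), ‖v x‖ ^ 2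

/-- The potential integral `∫₀^∞ ‖v‖^(p+1)` of the power nonlinearity, without its weight
`1 / (p + 1)` in the action. -/
noncomputable def potential (p : ℝ) (v : ℝ → E) : ℝ := ∫ x in Ioi (0 : ℝ), ‖v x‖ ^ (p + 1)

lemma mass_nonneg (v : ℝ → E) : 0 ≤ mass v :=
  integral_nonneg fun _ => by positivity

lemma potential_nonneg (p : ℝ) (v : ℝ → E) : 0 ≤ potential p v :=
  integral_nonneg fun _ => by positivity

lemma exists_ne_zero_of_mass_pos {v : ℝ → E} (hv : 0 < mass v) : ∃ x ≥ (0 : ℝ), v x ≠ 0 := by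
  by_contra! h
  exact hv.ne' <| setIntegral_eq_zero_of_forall_eq_zero fun x hx => by simp [h x (le_of_lt hx)]

lemma potential_eq_zero_of_mass_eq_zero {p : ℝ} (hp : p + 1 ≠ 0) {v : ℝ → E}
    (hv : IntegrableOn (fun x => ‖v x‖ ^ 2) (Ioi 0)) (h : mass v = 0) : potential p v = 0 := by
  have hae := (setIntegral_eq_zero_iff_of_nonneg_ae
    (Eventually.of_forall fun x => sq_nonneg ‖v x‖) hv).mp h
  refine integral_eq_zero_of_ae (hae.mono fun x hx => ?_)
  have hx0 : ‖v x‖ = 0 := by simpa using hx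
  simp [hx0, Real.zero_rpow hp]

variable [NormedSpace ℝ E]

/-- The kinetic integral `∫₀^∞ ‖v'‖²`. -/
noncomputable def kinetic (v : ℝ → E) : ℝ := ∫ x in Ioi (0 : ℝ), ‖deriv v x‖ ^ 2

/-- The function `x ↦ c v(μ x)`. Amplitude and dilation factors are independent, so that it covers
both the multiples of `v` (`μ = 1`) and the mass-preserving dilations (`c = √μ`). -/
def rescale (c μ : ℝ) (v : ℝ → E) (x : ℝ) : E := c • v (μ * x)

lemma rescale_zero (c μ : ℝ) (v : ℝ → E) : rescale c μ v 0 = c • v 0 := by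
  simp [rescale]

lemma norm_rescale_sq (c μ : ℝ) (v : ℝ → E) (x : ℝ) :
    ‖rescale c μ v x‖ ^ 2 = c ^ 2 * ‖v (μ * x)‖ ^ 2 := by
  simp [rescale, norm_smul, mul_pow]

lemma norm_deriv_rescale_sq (c μ : ℝ) (v : ℝ → E) (x : ℝ) :
    ‖deriv (rescale c μ v) x‖ ^ 2 = c ^ 2 * μ ^ 2 * ‖deriv v (μ * x)‖ ^ 2 := by
  have hderiv : deriv (rescale c μ v) x = c • μ • deriv v (μ * x) := by
    unfold rescale
    rw [deriv_fun_const_smul_field, deriv_comp_mul_left]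
  simp [hderiv, norm_smul, mul_pow, mul_assoc]

lemma norm_rescale_rpow (c μ r : ℝ) (v : ℝ → E) (x : ℝ) :
    ‖rescale c μ v x‖ ^ r = |c| ^ r * ‖v (μ * x)‖ ^ r := by
  rw [rescale, norm_smul, Real.norm_eq_abs, Real.mul_rpow (abs_nonneg c) (norm_nonneg _)]

lemma mass_rescale (c : ℝ) {μ : ℝ} (hμ : 0 < μ) (v : ℝ → E) :
    mass (rescale c μ v) = c ^ 2 * μ⁻¹ * mass v := by
  simp only [mass, norm_rescale_sq, integral_const_mul]
  rw [integral_comp_mul_left_Ioi (fun x => ‖v x‖ ^ 2) 0 hμ]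
  simp [mul_assoc]

lemma kinetic_rescale (c : ℝ) {μ : ℝ} (hμ : 0 < μ) (v : ℝ → E) :
    kinetic (rescale c μ v) = c ^ 2 * μ * kinetic v := by
  simp only [kinetic, norm_deriv_rescale_sq, integral_const_mul]
  rw [integral_comp_mul_left_Ioi (fun x => ‖deriv v x‖ ^ 2) 0 hμ, mul_zero, smul_eq_mul]
  field_simp

lemma potential_rescale (p c : ℝ) {μ : ℝ} (hμ : 0 < μ) (v : ℝ → E) :
    potential p (rescale c μ v) = |c| ^ (p + 1) * μ⁻¹ * potential p v := by
  simp only [potential, norm_rescale_rpow, integral_const_mul]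
  rw [integral_comp_mul_left_Ioi (fun x => ‖v x‖ ^ (p + 1)) 0 hμ]
  simp [mul_assoc]

lemma mass_rescale_sqrt {l : ℝ} (hl : 0 < l) (v : ℝ → E) : mass (rescale √l l v) = mass v := by
  rw [mass_rescale _ hl, Real.sq_sqrt hl.le, mul_inv_cancel₀ hl.ne', one_mul]

lemma kinetic_rescale_sqrt {l : ℝ} (hl : 0 < l) (v : ℝ → E) :
    kinetic (rescale √l l v) = l ^ 2 * kinetic v := by
  rw [kinetic_rescale _ hl, Real.sq_sqrt hl.le, ← sq]

lemma potential_rescale_sqrt (p : ℝ) {l : ℝ} (hl : 0 < l) (v : ℝ → E) :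
    potential p (rescale √l l v) = l ^ ((p - 1) / 2) * potential p v := by
  have hexp : √l ^ (p + 1) * l⁻¹ = l ^ ((p - 1) / 2) := by
    rw [Real.sqrt_eq_rpow, ← Real.rpow_mul hl.le, ← Real.rpow_neg_one l, ← Real.rpow_add hl]
    ring_nf
  rw [potential_rescale _ _ hl, abs_of_nonneg (Real.sqrt_nonneg l), hexp]

end Integrals

lemma memA_rescale {p : ℝ} {v : ℝ → ℂ} (hv : MemA p v) (c : ℝ) {μ : ℝ} (hμ : 0 < μ) :
    MemA p (rescale c μ v) := by
  obtain ⟨hC1, hmass, hkin, hpot⟩ := hv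
  refine ⟨contDiffOn_const.smul (hC1.comp (contDiff_const.mul contDiff_id).contDiffOn
    fun x hx => mul_nonneg hμ.le hx), ?_, ?_, ?_⟩
  · simp only [norm_rescale_sq]
    exact ((integrableOn_Ioi_comp_mul_left_iff (fun x => ‖v x‖ ^ 2) 0 hμ).mpr
      (by simpa using hmass)).const_mul _
  · simp only [norm_deriv_rescale_sq]
    exact ((integrableOn_Ioi_comp_mul_left_iff (fun x => ‖deriv v x‖ ^ 2) 0 hμ).mpr
      (by simpa using hkin)).const_mul _
  · simp only [norm_rescale_rpow]
    exact ((integrableOn_Ioi_comp_mul_left_iff (fun x => ‖v x‖ ^ (p + 1)) 0 hμ).mpr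
      (by simpa using hpot)).const_mul _

section Trace

variable {E : Type*} [NormedAddCommGroup E] [InnerProductSpace ℝ E] {v : ℝ → E} {a : ℝ}

lemma integrableOn_inner_deriv (hv : ContDiffOn ℝ 1 v (Ici a))
    (hv2 : IntegrableOn (fun x => ‖v x‖ ^ 2) (Ioi a))
    (hd2 : IntegrableOn (fun x => ‖deriv v x‖ ^ 2) (Ioi a)) :
    IntegrableOn (fun x => 2 * inner ℝ (v x) (deriv v x)) (Ioi a) := by
  have hv' := hv.mono Ioi_subset_Ici_self
  have hcont : ContinuousOn (fun x => 2 * inner ℝ (v x) (deriv v x)) (Ioi a) :=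
    continuousOn_const.mul
      (hv'.continuousOn.inner (hv'.continuousOn_deriv_of_isOpen isOpen_Ioi le_rfl))
  refine (hv2.add hd2).mono' (hcont.aestronglyMeasurable measurableSet_Ioi)
    (Eventually.of_forall fun x => ?_)
  calc ‖2 * inner ℝ (v x) (deriv v x)‖ = 2 * |inner ℝ (v x) (deriv v x)| := by simp
    _ ≤ 2 * (‖v x‖ * ‖deriv v x‖) := by gcongr; exact abs_real_inner_le_norm _ _
    _ ≤ ‖v x‖ ^ 2 + ‖deriv v x‖ ^ 2 := by linarith [two_mul_le_add_sq ‖v x‖ ‖deriv v x‖]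

lemma integral_inner_deriv (hv : ContDiffOn ℝ 1 v (Ici a))
    (hv2 : IntegrableOn (fun x => ‖v x‖ ^ 2) (Ioi a))
    (hd2 : IntegrableOn (fun x => ‖deriv v x‖ ^ 2) (Ioi a)) :
    ∫ x in Ioi a, 2 * inner ℝ (v x) (deriv v x) = -‖v a‖ ^ 2 := by
  have hderiv : ∀ x ∈ Ioi a,
      HasDerivAt (fun x => ‖v x‖ ^ 2) (2 * inner ℝ (v x) (deriv v x)) x := fun x hx =>
    ((hv.differentiableOn one_ne_zero).differentiableAt (Ici_mem_nhds hx)).hasDerivAt.norm_sq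
  have hint := integrableOn_inner_deriv hv hv2 hd2
  have hcont : ContinuousWithinAt (fun x => ‖v x‖ ^ 2) (Ici a) a :=
    (hv.continuousOn a self_mem_Ici).norm.pow 2
  rw [integral_Ioi_of_hasDerivAt_of_tendsto hcont hderiv hint
    (tendsto_zero_of_hasDerivAt_of_integrableOn_Ioi hderiv hint hv2), zero_sub]

lemma mul_norm_sq_le_integral_add_integral (s : ℝ) (hv : ContDiffOn ℝ 1 v (Ici a))
    (hv2 : IntegrableOn (fun x => ‖v x‖ ^ 2) (Ioi a))
    (hd2 : IntegrableOn (fun x => ‖deriv v x‖ ^ 2) (Ioi a)) :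
    s * ‖v a‖ ^ 2 ≤ s ^ 2 * (∫ x in Ioi a, ‖v x‖ ^ 2) + ∫ x in Ioi a, ‖deriv v x‖ ^ 2 := by
  have hexpand : ∀ x, ‖s • v x + deriv v x‖ ^ 2 =
      s ^ 2 * ‖v x‖ ^ 2 + s * (2 * inner ℝ (v x) (deriv v x)) + ‖deriv v x‖ ^ 2 := fun x => by
    rw [norm_add_sq_real, norm_smul, real_inner_smul_left, mul_pow, Real.norm_eq_abs, sq_abs]
    ring
  have hnonneg : 0 ≤ ∫ x in Ioi a, ‖s • v x + deriv v x‖ ^ 2 :=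
    integral_nonneg fun _ => by positivity
  have hcross := (integrableOn_inner_deriv hv hv2 hd2).const_mul s
  have hsum : IntegrableOn
      (fun x => s ^ 2 * ‖v x‖ ^ 2 + s * (2 * inner ℝ (v x) (deriv v x))) (Ioi a) :=
    (hv2.const_mul _).add hcross
  simp only [hexpand] at hnonneg
  rw [integral_add hsum hd2, integral_add (hv2.const_mul _) hcross, integral_const_mul,
    integral_const_mul, integral_inner_deriv hv hv2 hd2] at hnonneg
  linarith

end Trace

section Nehari

variable {p α ω : ℝ} {N : ℕ} {v : ℝ → ℂ}

lemma Ifun_eq (p α ω : ℝ) (N : ℕ) (v : ℝ → ℂ) :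
    Ifun p α ω N v = N * (kinetic v + ω * mass v - potential p v) + α * ‖v 0‖ ^ 2 := rfl

lemma Pfun_eq (p α : ℝ) (N : ℕ) (v : ℝ → ℂ) :
    Pfun p α N v =
      N * (kinetic v - (p - 1) / (2 * (p + 1)) * potential p v) + α / 2 * ‖v 0‖ ^ 2 := rfl

lemma Sfun_eq (p α ω : ℝ) (N : ℕ) (v : ℝ → ℂ) :
    Sfun p α ω N v = N * (1 / 2 * kinetic v + ω / 2 * mass v - 1 / (p + 1) * potential p v)
      + α / 2 * ‖v 0‖ ^ 2 := rfl

lemma Sfun_eq_half_Ifun_add (hp : p + 1 ≠ 0) (v : ℝ → ℂ) :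
    Sfun p α ω N v = 1 / 2 * Ifun p α ω N v + (p - 1) / (2 * (p + 1)) * N * potential p v := by
  rw [Sfun_eq, Ifun_eq]
  field_simp
  ring

lemma Sfun_sub_half_Pfun (hp : p + 1 ≠ 0) (v : ℝ → ℂ) :
    Sfun p α ω N v - 1 / 2 * Pfun p α N v =
      N * (ω / 2 * mass v + (p - 5) / (4 * (p + 1)) * potential p v) + α / 4 * ‖v 0‖ ^ 2 := by
  rw [Sfun_eq, Pfun_eq]
  field_simp
  ring

lemma Ifun_rescale_sqrt {l : ℝ} (hl : 0 < l) (v : ℝ → ℂ) :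
    Ifun p α ω N (rescale √l l v) =
      N * (l ^ 2 * kinetic v + ω * mass v - l ^ ((p - 1) / 2) * potential p v)
        + α * (l * ‖v 0‖ ^ 2) := by
  rw [Ifun_eq, kinetic_rescale_sqrt hl, mass_rescale_sqrt hl, potential_rescale_sqrt p hl,
    rescale_zero, norm_smul, mul_pow, Real.norm_of_nonneg (Real.sqrt_nonneg l), Real.sq_sqrt hl.le]

lemma MemA.mul_mass_le (hv : MemA p v) (hN : 0 < N) (α ω : ℝ) :
    N * (ω - α ^ 2 / N ^ 2) * mass v ≤ N * (kinetic v + ω * mass v) + α * ‖v 0‖ ^ 2 := by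
  have hN' : (0 : ℝ) < N := by exact_mod_cast hN
  have htrace : -(α / N) * ‖v 0‖ ^ 2 ≤ (-(α / N)) ^ 2 * mass v + kinetic v :=
    mul_norm_sq_le_integral_add_integral _ hv.1 hv.2.1 hv.2.2.1
  have := mul_le_mul_of_nonneg_left htrace hN'.le
  field_simp at this ⊢
  linarith

lemma MemA.mass_pos_of_Ifun_neg (hv : MemA p v) (hp : p + 1 ≠ 0) (hN : 0 < N)
    (hI : Ifun p α ω N v < 0) : 0 < mass v := by
  refine (mass_nonneg v).lt_of_ne' fun hmass => hI.not_ge ?_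
  have hquad := hv.mul_mass_le hN α ω
  rw [Ifun_eq, potential_eq_zero_of_mass_eq_zero hp hv.2.1 hmass, sub_zero]
  simpa only [hmass, mul_zero] using hquad

/-- The values of the action on the Nehari manifold; its infimum is the level `d`. -/
def nehariActions (p α ω : ℝ) (N : ℕ) : Set ℝ :=
  {s : ℝ | ∃ v : ℝ → ℂ, MemA p v ∧ (∃ x ≥ (0 : ℝ), v x ≠ 0) ∧
    Ifun p α ω N v = 0 ∧ s = Sfun p α ω N v}

lemma sInf_nehariActions_le (hp : 1 ≤ p) (hv : MemA p v) (hmass : 0 < mass v)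
    (hI : Ifun p α ω N v = 0) :
    sInf (nehariActions p α ω N) ≤ (p - 1) / (2 * (p + 1)) * N * potential p v := by
  have hp1 : p + 1 ≠ 0 := by linarith
  have : 0 ≤ (p - 1) / (2 * (p + 1)) := div_nonneg (by linarith) (by linarith)
  have haction : ∀ u : ℝ → ℂ, Ifun p α ω N u = 0 →
      Sfun p α ω N u = (p - 1) / (2 * (p + 1)) * N * potential p u := fun u hu => by
    rw [Sfun_eq_half_Ifun_add hp1, hu, mul_zero, zero_add]
  rw [← haction v hI]
  refine csInf_le ⟨0, ?_⟩ ⟨v, hv, exists_ne_zero_of_mass_pos hmass, hI, rfl⟩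
  rintro _ ⟨u, -, -, hu, rfl⟩
  rw [haction u hu]
  exact mul_nonneg (by positivity) (potential_nonneg p u)

lemma exists_rpow_mul_eq {r a b : ℝ} (hr : 0 < r) (ha : 0 < a) (hab : a < b) :
    ∃ t ∈ Ioo (0 : ℝ) 1, t ^ r * b = a := by
  have hb : 0 < b := ha.trans hab
  have hratio : 0 < a / b := div_pos ha hb
  refine ⟨(a / b) ^ r⁻¹, ⟨Real.rpow_pos_of_pos hratio _,
    Real.rpow_lt_one hratio.le ((div_lt_one hb).mpr hab) (inv_pos.mpr hr)⟩, ?_⟩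
  rw [Real.rpow_inv_rpow hratio.le hr.ne', div_mul_cancel₀ _ hb.ne']

lemma MemA.exists_Ifun_rescale_eq_zero (hv : MemA p v) (hp : 1 < p) (hN : 0 < N)
    (hω : α ^ 2 / (N : ℝ) ^ 2 < ω) (hI : Ifun p α ω N v < 0) :
    ∃ t ∈ Ioo (0 : ℝ) 1, Ifun p α ω N (rescale t 1 v) = 0 := by
  have hN' : (0 : ℝ) < N := by exact_mod_cast hN
  have hmass : 0 < mass v := hv.mass_pos_of_Ifun_neg (by linarith) hN hI
  have hquad : 0 < N * (kinetic v + ω * mass v) + α * ‖v 0‖ ^ 2 :=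
    (mul_pos (mul_pos hN' (sub_pos.mpr hω)) hmass).trans_le (hv.mul_mass_le hN α ω)
  rw [Ifun_eq] at hI
  obtain ⟨t, ht, htp⟩ := exists_rpow_mul_eq (sub_pos.mpr hp) hquad
    (show _ < N * potential p v by linarith)
  have hpow : t ^ (p + 1) = t ^ (p - 1) * t ^ 2 := by
    rw [← Real.rpow_natCast t 2, ← Real.rpow_add ht.1]
    ring_nf
  refine ⟨t, ht, ?_⟩
  rw [Ifun_eq, kinetic_rescale t one_pos, mass_rescale t one_pos, potential_rescale p t one_pos,
    rescale_zero, norm_smul, Real.norm_eq_abs, mul_pow, sq_abs, abs_of_pos ht.1, hpow]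
  linear_combination (-t ^ 2) * htp

theorem MemA.sInf_nehariActions_lt (hv : MemA p v) (hp : 1 < p) (hN : 0 < N)
    (hω : α ^ 2 / (N : ℝ) ^ 2 < ω) (hI : Ifun p α ω N v < 0) :
    sInf (nehariActions p α ω N) < (p - 1) / (2 * (p + 1)) * N * potential p v := by
  have hN' : (0 : ℝ) < N := by exact_mod_cast hN
  obtain ⟨t, ⟨ht0, ht1⟩, htI⟩ := hv.exists_Ifun_rescale_eq_zero hp hN hω hI
  have hmass : 0 < mass v := hv.mass_pos_of_Ifun_neg (by linarith) hN hI
  have hpot : 0 < potential p v := by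
    have hquad := hv.mul_mass_le hN α ω
    have : 0 < N * (ω - α ^ 2 / N ^ 2) * mass v := mul_pos (mul_pos hN' (sub_pos.mpr hω)) hmass
    rw [Ifun_eq] at hI
    exact pos_of_mul_pos_right (show 0 < N * potential p v by linarith) hN'.le
  have hmass_t : 0 < mass (rescale t 1 v) := by
    rw [mass_rescale t one_pos]
    positivity
  have : 0 < (p - 1) / (2 * (p + 1)) * N :=
    mul_pos (div_pos (by linarith) (by linarith)) hN'
  calc sInf (nehariActions p α ω N)
      ≤ (p - 1) / (2 * (p + 1)) * N * potential p (rescale t 1 v) :=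
        sInf_nehariActions_le hp.le (memA_rescale hv t one_pos) hmass_t htI
    _ = (p - 1) / (2 * (p + 1)) * N * (t ^ (p + 1) * potential p v) := by
        rw [potential_rescale p t one_pos, abs_of_pos ht0, inv_one, mul_one]
    _ < (p - 1) / (2 * (p + 1)) * N * potential p v := by
        gcongr
        exact mul_lt_of_lt_one_left hpot (Real.rpow_lt_one ht0.le ht1 (by linarith))

end Nehari

/-- The half-line soliton `x ↦ ((p+1)ω/2 · sech²((p-1)√ω/2 · x - c))^(1/(p-1))`; the vertex
condition of the star graph enters only through the shift `c`. -/
noncomputable def solitonProfile (p ω c x : ℝ) : ℝ :=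
  ((p + 1) * ω / 2 * (1 / Real.cosh ((p - 1) * √ω / 2 * x - c)) ^ 2) ^ (1 / (p - 1))

namespace solitonProfile

variable {p ω : ℝ}

lemma base_pos (hp : 1 < p) (hω : 0 < ω) (z : ℝ) :
    0 < (p + 1) * ω / 2 * (1 / Real.cosh z) ^ 2 := by
  have := Real.cosh_pos z
  have : 0 < p + 1 := by linarith
  positivity

lemma pos (hp : 1 < p) (hω : 0 < ω) (c x : ℝ) : 0 < solitonProfile p ω c x :=
  Real.rpow_pos_of_pos (base_pos hp hω _) _

lemma rpow_add_one (hp : 1 < p) (hω : 0 < ω) (c x : ℝ) :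
    solitonProfile p ω c x ^ (p + 1) =
      (p + 1) * ω / 2 * (1 / Real.cosh ((p - 1) * √ω / 2 * x - c)) ^ 2
        * solitonProfile p ω c x ^ 2 := by
  have hbase : solitonProfile p ω c x ^ (p - 1) =
      (p + 1) * ω / 2 * (1 / Real.cosh ((p - 1) * √ω / 2 * x - c)) ^ 2 := by
    rw [solitonProfile, one_div (p - 1),
      Real.rpow_inv_rpow (base_pos hp hω _).le (sub_ne_zero.mpr hp.ne')]
  rw [← hbase, ← Real.rpow_natCast _ 2, ← Real.rpow_add (pos hp hω c x)]
  ring_nf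

lemma hasDerivAt (hp : 1 < p) (hω : 0 < ω) (c x : ℝ) :
    HasDerivAt (solitonProfile p ω c)
      (-√ω * Real.tanh ((p - 1) * √ω / 2 * x - c) * solitonProfile p ω c x) x := by
  have hphase : HasDerivAt (fun x => (p - 1) * √ω / 2 * x - c) ((p - 1) * √ω / 2) x := by
    simpa using ((hasDerivAt_id x).const_mul ((p - 1) * √ω / 2)).sub_const c
  have hcosh := (Real.cosh_pos ((p - 1) * √ω / 2 * x - c)).ne'
  have hbase := base_pos hp hω ((p - 1) * √ω / 2 * x - c)
  have hp' : p - 1 ≠ 0 := sub_ne_zero.mpr hp.ne'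
  refine (((((hasDerivAt_const x 1).div hphase.cosh hcosh).pow 2).const_mul
    ((p + 1) * ω / 2)).rpow_const (p := 1 / (p - 1)) (Or.inl hbase.ne')).congr_deriv ?_
  simp only [Pi.div_apply, Pi.pow_apply, Nat.add_one_sub_one, pow_one, Nat.cast_ofNat]
  rw [Real.rpow_sub_one hbase.ne', solitonProfile, Real.tanh_eq_sinh_div_cosh]
  generalize (p - 1) * √ω / 2 * x - c = z at hcosh hbase ⊢
  have : p + 1 ≠ 0 := by linarith
  field_simp
  ring

lemma continuous (hp : 1 < p) (hω : 0 < ω) (c : ℝ) : Continuous (solitonProfile p ω c) :=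
  continuous_iff_continuousAt.mpr fun x => (hasDerivAt hp hω c x).continuousAt

lemma deriv_sq (hp : 1 < p) (hω : 0 < ω) (c x : ℝ) :
    deriv (solitonProfile p ω c) x ^ 2 =
      ω * solitonProfile p ω c x ^ 2 - 2 / (p + 1) * solitonProfile p ω c x ^ (p + 1) := by
  have := (Real.cosh_pos ((p - 1) * √ω / 2 * x - c)).ne'
  have : p + 1 ≠ 0 := by linarith
  rw [(hasDerivAt hp hω c x).deriv, rpow_add_one hp hω, Real.tanh_eq_sinh_div_cosh, mul_pow,
    mul_pow, neg_sq, Real.sq_sqrt hω.le, div_pow, Real.sinh_sq]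
  field_simp

lemma le_exp (hp : 1 < p) (hω : 0 < ω) (c x : ℝ) :
    solitonProfile p ω c x ≤
      (2 * (p + 1) * ω * Real.exp (2 * c)) ^ (1 / (p - 1)) * Real.exp (-√ω * x) := by
  have hsech : ∀ z : ℝ, 1 / Real.cosh z ≤ 2 * Real.exp (-z) := fun z => by
    rw [div_le_iff₀ (Real.cosh_pos z), Real.cosh_eq]
    have : Real.exp (-z) * Real.exp z = 1 := by rw [← Real.exp_add, neg_add_cancel, Real.exp_zero]
    nlinarith [sq_nonneg (Real.exp (-z))]
  have : 0 < p + 1 := by linarith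
  have hp' : 0 < p - 1 := by linarith
  set z := (p - 1) * √ω / 2 * x - c with hz
  have := Real.cosh_pos z
  calc solitonProfile p ω c x
      ≤ ((p + 1) * ω / 2 * (2 * Real.exp (-z)) ^ 2) ^ (1 / (p - 1)) := by
        rw [solitonProfile]
        gcongr
        exact hsech z
    _ = (2 * (p + 1) * ω * Real.exp (2 * c) * Real.exp (-((p - 1) * √ω * x))) ^ (1 / (p - 1)) := by
        rw [mul_assoc _ (Real.exp (2 * c)), ← Real.exp_add, mul_pow, ← Real.exp_nat_mul, hz]
        ring_nf
    _ = _ := by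
        rw [Real.mul_rpow (by positivity) (Real.exp_pos _).le, ← Real.exp_mul]
        congr 2
        field_simp

lemma integrableOn_sq (hp : 1 < p) (hω : 0 < ω) (c : ℝ) :
    IntegrableOn (fun x => solitonProfile p ω c x ^ 2) (Ioi 0) := by
  set K := (2 * (p + 1) * ω * Real.exp (2 * c)) ^ (1 / (p - 1))
  have hdecay : ∀ x, solitonProfile p ω c x ^ 2 ≤ K ^ 2 * Real.exp (-(2 * √ω) * x) := fun x => by
    calc solitonProfile p ω c x ^ 2 ≤ (K * Real.exp (-√ω * x)) ^ 2 :=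
          pow_le_pow_left₀ (pos hp hω c x).le (le_exp hp hω c x) 2
      _ = K ^ 2 * Real.exp (-(2 * √ω) * x) := by
          rw [mul_pow, ← Real.exp_nat_mul]
          ring_nf
  have hexp := (exp_neg_integrableOn_Ioi 0 (b := 2 * √ω) (by positivity)).const_mul (K ^ 2)
  refine hexp.mono' ((continuous hp hω c).pow 2).aestronglyMeasurable
    (Eventually.of_forall fun x => ?_)
  rw [Real.norm_of_nonneg (sq_nonneg _)]
  exact hdecay x

lemma integrableOn_rpow_add_one (hp : 1 < p) (hω : 0 < ω) (c : ℝ) :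
    IntegrableOn (fun x => solitonProfile p ω c x ^ (p + 1)) (Ioi 0) := by
  have hcont : Continuous fun x => solitonProfile p ω c x ^ (p + 1) :=
    (continuous hp hω c).rpow_const fun x => Or.inl (pos hp hω c x).ne'
  refine Integrable.mono' ((integrableOn_sq hp hω c).const_mul ((p + 1) * ω / 2))
    hcont.aestronglyMeasurable (Eventually.of_forall fun x => ?_)
  have : 0 < p + 1 := by linarith
  have hsech : (1 / Real.cosh ((p - 1) * √ω / 2 * x - c)) ^ 2 ≤ 1 :=
    pow_le_one₀ (one_div_nonneg.mpr (Real.cosh_pos _).le)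
      ((div_le_one (Real.cosh_pos _)).mpr (Real.one_le_cosh _))
  rw [Real.norm_of_nonneg (Real.rpow_nonneg (pos hp hω c x).le _), rpow_add_one hp hω]
  gcongr
  exact mul_le_of_le_one_right (by positivity) hsech

lemma integral_rpow_add_one_pos (hp : 1 < p) (hω : 0 < ω) (c : ℝ) :
    0 < ∫ x in Ioi (0 : ℝ), solitonProfile p ω c x ^ (p + 1) := by
  have hpos : ∀ x, 0 < solitonProfile p ω c x ^ (p + 1) := fun x =>
    Real.rpow_pos_of_pos (pos hp hω c x) _
  rw [setIntegral_pos_iff_support_of_nonneg_ae (Eventually.of_forall fun x => (hpos x).le)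
    (integrableOn_rpow_add_one hp hω c),
    show Function.support _ = univ from Set.eq_univ_of_forall fun x => (hpos x).ne']
  simp

theorem integral_deriv_sq (hp : 1 < p) (hω : 0 < ω) (c : ℝ) :
    ∫ x in Ioi (0 : ℝ), deriv (solitonProfile p ω c) x ^ 2 =
      ω * (∫ x in Ioi (0 : ℝ), solitonProfile p ω c x ^ 2)
        - 2 / (p + 1) * ∫ x in Ioi (0 : ℝ), solitonProfile p ω c x ^ (p + 1) := by
  simp only [deriv_sq hp hω]
  rw [integral_sub ((integrableOn_sq hp hω c).const_mul _)
    ((integrableOn_rpow_add_one hp hω c).const_mul _), integral_const_mul, integral_const_mul]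

end solitonProfile

section Comparison

lemma rpow_mul_one_add_mul_one_sub_le_one {r l : ℝ} (hr : 0 ≤ r) (hl : 0 ≤ l) :
    l ^ r * (1 + r * (1 - l)) ≤ 1 := by
  have hpow : l ^ r ≤ Real.exp (r * (l - 1)) := by
    rw [mul_comm, Real.exp_mul]
    exact Real.rpow_le_rpow hl (by linarith [Real.add_one_le_exp (l - 1)]) hr
  calc l ^ r * (1 + r * (1 - l)) ≤ l ^ r * Real.exp (r * (1 - l)) := by
        gcongr
        linarith [Real.add_one_le_exp (r * (1 - l))]
    _ ≤ Real.exp (r * (l - 1)) * Real.exp (r * (1 - l)) := by gcongr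
    _ = 1 := by rw [← Real.exp_add, ← mul_add]; simp

/-- The function of the dilation factor `l` to which the comparison of `v` with the ground state
reduces; `q = (p - 1) / 2`, so that the dilation multiplies the potential integral by `l ^ q`. -/
noncomputable def dilationDefect (q l : ℝ) : ℝ :=
  2 * (q - 2) - 2 * (q - 1) * l + l ^ (q - 1) * (2 - (q - 1) * (q - 2) * (1 - l) ^ 2)

lemma hasDerivAt_dilationDefect (q : ℝ) {l : ℝ} (hl : 0 < l) :
    HasDerivAt (dilationDefect q)
      ((q - 1) * (2 * (l ^ (q - 2) * (1 + (q - 2) * (1 - l)) - 1)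
        - (q - 2) * (q + 1) * (l ^ (q - 2) * (1 - l) ^ 2))) l := by
  have hlinear := ((hasDerivAt_id l).const_mul (2 * (q - 1))).const_sub (2 * (q - 2))
  have hpow := Real.hasDerivAt_rpow_const (x := l) (p := q - 1) (Or.inl hl.ne')
  have hquad := ((((hasDerivAt_id l).const_sub 1).pow 2).const_mul
    ((q - 1) * (q - 2))).const_sub 2
  refine (hlinear.add (hpow.mul hquad)).congr_deriv ?_
  have hstep : l ^ (q - 1) = l ^ (q - 2) * l := by
    rw [← Real.rpow_add_one hl.ne']
    ring_nf
  rw [hstep, show q - 1 - 1 = q - 2 by ring]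
  simp only [Pi.pow_apply, id_eq]
  push_cast
  ring

lemma dilationDefect_nonneg {q l : ℝ} (hq : 2 ≤ q) (hl : 0 < l) (hl1 : l ≤ 1) :
    0 ≤ dilationDefect q l := by
  have hanti : AntitoneOn (dilationDefect q) (Icc l 1) := by
    refine antitoneOn_of_hasDerivWithinAt_nonpos (convex_Icc l 1)
      (fun x hx => (hasDerivAt_dilationDefect q (hl.trans_le hx.1)).continuousAt.continuousWithinAt)
      (fun x hx => (hasDerivAt_dilationDefect q
        (hl.trans_le (interior_subset hx).1)).hasDerivWithinAt) fun x hx => ?_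
    have hx0 : 0 < x := hl.trans_le (interior_subset hx).1
    have hbernoulli := rpow_mul_one_add_mul_one_sub_le_one (sub_nonneg.mpr hq) hx0.le
    have hcurv : 0 ≤ (q - 2) * (q + 1) * (x ^ (q - 2) * (1 - x) ^ 2) :=
      mul_nonneg (mul_nonneg (by linarith) (by linarith)) (by positivity)
    exact mul_nonpos_of_nonneg_of_nonpos (by linarith) (by linarith)
  calc 0 = dilationDefect q 1 := by simp only [dilationDefect, Real.one_rpow]; ring
    _ ≤ dilationDefect q l := hanti (left_mem_Icc.mpr hl1) (right_mem_Icc.mpr hl1) hl1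

/-- Read with `A`, `m`, `b`, `a` the kinetic integral, `ω` times the mass, `1 / (p + 1)` times the
potential integral, and the vertex term `α ‖v 0‖² / N`. -/
lemma le_of_virial_of_nehari {q l A m b a : ℝ} (hq : 2 ≤ q) (hl : 0 < l) (hl1 : l ≤ 1)
    (hb : 0 ≤ b) (hvirial : A - q * b + a / 2 ≤ 0)
    (hnehari : 0 ≤ l ^ 2 * A + m - (2 * q + 2) * (l ^ q * b) + l * a)
    (hm : m ≤ (q * (q - 1) + 2) * (l ^ q * b)) :
    q * (l ^ q * b) ≤ m / 2 + (q - 2) / 2 * b + a / 4 := by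
  have hlq : l ^ q = l * l ^ (q - 1) := by
    rw [Real.rpow_sub_one hl.ne']
    field_simp
  have hkin : l ^ 2 * A ≤ l ^ 2 * (q * b - a / 2) := by
    gcongr
    linarith
  have hvertex : -a * (l * (2 - l)) ≤ 2 * q * b * (l ^ 2 + (q - 3) * l ^ q) := by
    linarith
  -- Scaled by `(1 - l)² / (l (2 - l))`, this bound on `-a` beats the one that the conclusion needs
  -- by a nonnegative multiple of the dilation defect.
  have hdefect := mul_nonneg (mul_nonneg hb hl.le) (dilationDefect_nonneg hq hl hl1)
  have hvertex' : -a * (1 - l) ^ 2 ≤ 2 * b * (2 * l ^ q - 2 + q - q * l ^ 2) := by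
    refine le_of_mul_le_mul_right ?_ (show 0 < l * (2 - l) from mul_pos hl (by linarith))
    have := mul_le_mul_of_nonneg_right hvertex (sq_nonneg (1 - l))
    rw [dilationDefect] at hdefect
    rw [hlq] at this ⊢
    linarith
  linarith

theorem le_Sfun_sub_half_Pfun {p α ω l : ℝ} {N : ℕ} {v : ℝ → ℂ} (hp : 5 ≤ p) (hN : 0 < N)
    (hl : 0 < l) (hl1 : l ≤ 1) (hP : Pfun p α N v ≤ 0)
    (hI : 0 ≤ Ifun p α ω N (rescale √l l v))
    (hmass : ω * mass v ≤
      ((p - 1) * (p - 3) / (4 * (p + 1)) + 2 / (p + 1)) * (l ^ ((p - 1) / 2) * potential p v)) :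
    (p - 1) / (2 * (p + 1)) * N * (l ^ ((p - 1) / 2) * potential p v) ≤
      Sfun p α ω N v - 1 / 2 * Pfun p α N v := by
  have hN' : (0 : ℝ) < N := by exact_mod_cast hN
  obtain ⟨q, rfl⟩ : ∃ q, p = 2 * q + 1 := ⟨(p - 1) / 2, by ring⟩
  have hq : q + 1 ≠ 0 := by linarith
  obtain ⟨b, hb⟩ : ∃ b, potential (2 * q + 1) v = (2 * q + 2) * b :=
    ⟨potential (2 * q + 1) v / (2 * q + 2), by field_simp⟩
  obtain ⟨a, ha⟩ : ∃ a, α * ‖v 0‖ ^ 2 = N * a := ⟨α * ‖v 0‖ ^ 2 / N, by field_simp⟩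
  have hexp : (2 * q + 1 - 1) / 2 = q := by ring
  have hweight (r : ℝ) : r / (2 * (2 * q + 1 + 1)) * ((2 * q + 2) * b) = r / 2 * b := by
    field_simp
    ring
  have hb0 : 0 ≤ b :=
    nonneg_of_mul_nonneg_right (hb ▸ potential_nonneg (2 * q + 1) v) (by linarith)
  have hvirial : kinetic v - q * b + a / 2 ≤ 0 := by
    refine le_of_mul_le_mul_left (le_of_eq_of_le ?_ (hP.trans_eq (mul_zero _).symm)) hN'
    rw [Pfun_eq, hb, hweight]
    linear_combination -1 / 2 * ha
  have hnehari : 0 ≤ l ^ 2 * kinetic v + ω * mass v - (2 * q + 2) * (l ^ q * b) + l * a := by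
    refine le_of_mul_le_mul_left (le_of_eq_of_le (mul_zero _) (hI.trans_eq ?_)) hN'
    rw [Ifun_rescale_sqrt hl, hexp, hb]
    linear_combination l * ha
  rw [hexp, hb] at hmass ⊢
  have hm : ω * mass v ≤ (q * (q - 1) + 2) * (l ^ q * b) :=
    hmass.trans_eq (by field_simp; ring)
  calc (2 * q + 1 - 1) / (2 * (2 * q + 1 + 1)) * N * (l ^ q * ((2 * q + 2) * b))
      = N * (q * (l ^ q * b)) := by linear_combination N * l ^ q * hweight (2 * q + 1 - 1)
    _ ≤ N * (ω * mass v / 2 + (q - 2) / 2 * b + a / 4) :=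
        mul_le_mul_of_nonneg_left
          (le_of_virial_of_nehari (by linarith) hl hl1 hb0 hvirial hnehari hm) hN'.le
    _ = Sfun (2 * q + 1) α ω N v - 1 / 2 * Pfun (2 * q + 1) α N v := by
        rw [Sfun_sub_half_Pfun (by linarith), hb,
          show 4 * (2 * q + 1 + 1) = 2 * (2 * (2 * q + 1 + 1)) by ring, ← div_div, hweight]
        linear_combination -1 / 4 * ha

end Comparison

theorem key_comparison_lemma_general {p α ω c : ℝ} {N : ℕ} (hp : 5 ≤ p) (hN : 0 < N)
    (hω : α ^ 2 / (N : ℝ) ^ 2 < ω)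
    (hchar : sInf (nehariActions p α ω N) =
      (p - 1) / (2 * (p + 1)) * N * ∫ x in Ioi (0 : ℝ), solitonProfile p ω c x ^ (p + 1))
    (hsecond : ∫ x in Ioi (0 : ℝ), deriv (solitonProfile p ω c) x ^ 2 ≤
      (p - 1) * (p - 3) / (4 * (p + 1)) * ∫ x in Ioi (0 : ℝ), solitonProfile p ω c x ^ (p + 1))
    {v : ℝ → ℂ} (hv : MemA p v) (hmass : mass v ≤ ∫ x in Ioi (0 : ℝ), solitonProfile p ω c x ^ 2)
    (hpot : ∫ x in Ioi (0 : ℝ), solitonProfile p ω c x ^ (p + 1) < potential p v)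
    (hP : Pfun p α N v ≤ 0) :
    sInf (nehariActions p α ω N) ≤ Sfun p α ω N v - 1 / 2 * Pfun p α N v := by
  have hp1 : 1 < p := by linarith
  have hω0 : 0 < ω := lt_of_le_of_lt (by positivity) hω
  obtain ⟨l, ⟨hl0, hl1⟩, hl⟩ := exists_rpow_mul_eq (show 0 < (p - 1) / 2 by linarith)
    (solitonProfile.integral_rpow_add_one_pos hp1 hω0 c) hpot
  have hnehari : 0 ≤ Ifun p α ω N (rescale √l l v) := by
    by_contra! hneg
    have hlt := (memA_rescale hv √l hl0).sInf_nehariActions_lt hp1 hN hω hneg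
    rw [potential_rescale_sqrt p hl0, hl] at hlt
    exact hlt.ne hchar
  rw [hchar, ← hl]
  refine le_Sfun_sub_half_Pfun hp hN hl0 hl1.le hP hnehari ?_
  rw [hl, add_mul]
  linarith [mul_le_mul_of_nonneg_left hmass hω0.le, solitonProfile.integral_deriv_sq hp1 hω0 c]

/-- Key comparison lemma in the attractive case `α < 0`: if `v` in the admissible class
has mass at most that of the ground state `φ`, strictly larger `L^{p+1}`-norm, and
`P(v) ≤ 0`, then `d ≤ S_ω(v) − (1/2)P(v)`, assuming the variational characterization of
`d` and the second-derivative condition for `φ`. -/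
theorem key_comparison_lemma (p : ℝ) (hp : 5 < p) (N : ℕ) (hN : 2 ≤ N)
    (α ω : ℝ) (hα : α < 0) (hω : α ^ 2 / (N : ℝ) ^ 2 < ω)
    (φ : ℝ → ℝ)
    (hφ : φ = fun x : ℝ => ((p + 1) * ω / 2 *
      (1 / Real.cosh ((p - 1) * Real.sqrt ω / 2 * x
        - arctanh (α / ((N : ℝ) * Real.sqrt ω)))) ^ 2) ^ (1 / (p - 1)))
    (d : ℝ)
    (hd : d = sInf {s : ℝ | ∃ v : ℝ → ℂ, MemA p v ∧ (∃ x ≥ (0 : ℝ), v x ≠ 0) ∧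
      Ifun p α ω N v = 0 ∧ s = Sfun p α ω N v})
    (hchar : d = (p - 1) / (2 * (p + 1)) * (N : ℝ) * ∫ x in Set.Ioi (0 : ℝ), φ x ^ (p + 1))
    (hsecond : (∫ x in Set.Ioi (0 : ℝ), (deriv φ x) ^ 2)
      ≤ (p - 1) * (p - 3) / (4 * (p + 1)) * ∫ x in Set.Ioi (0 : ℝ), φ x ^ (p + 1)) :
    ∀ v : ℝ → ℂ, MemA p v →
      (∫ x in Set.Ioi (0 : ℝ), ‖v x‖ ^ 2) ≤ (∫ x in Set.Ioi (0 : ℝ), (φ x) ^ 2) →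
      (∫ x in Set.Ioi (0 : ℝ), φ x ^ (p + 1)) < (∫ x in Set.Ioi (0 : ℝ), ‖v x‖ ^ (p + 1)) →
      Pfun p α N v ≤ 0 →
      d ≤ Sfun p α ω N v - (1 / 2) * Pfun p α N v := by
  subst hφ hd
  intro v hv hmass hpot hP
  exact key_comparison_lemma_general hp.le (by lia) hω hchar hsecond hv hmass hpot hP
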